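/- Let r0 = r1 = 2 and let (T^-, T^+, σ) be a primitive semi-standard linked tableaux pair for the generalized Kronecker quiver. Fix a box B in the first row of T^- whose label has second entry 1, and suppose B is the j-th such box from the left. Let s be the number of boxes in the second row of T^- whose labels have second entry 2 and which lie in a column strictly to the left of the column of B; set t = j − s; let y be the number of boxes in the first row of T^- whose labels have second entry 2 and which lie strictly to the left of B; and let x be the number of boxes in the first row of T^+ whose labels have second entry 2 and which lie strictly to the left of the box of T^+ corresponding to B under the link. Then t > 0 and |x − y| < t. -/

import Mathlib

namespace QuiverSAGBI

/-- The variable `x^i_{jk}`: the `(j,k)` entry of the generic matrix `M_i`. -/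
abbrev KVar (K r0 r1 : ℕ) := Fin K × Fin r1 × Fin r0

/-- The coordinate ring of the representation space of the generalized
Kronecker quiver with `K` arrows and dimension vector `(r0, r1)`. -/
abbrev KPoly (K r0 r1 : ℕ) := MvPolynomial (KVar K r0 r1) ℂ

/-- `x_v` is a greater variable than `x_w`:  `v.1 < w.1`, or `v.1 = w.1` and
`v.2.1 < w.2.1`, or these agree and `v.2.2 < w.2.2`. -/
def VarGT {K r0 r1 : ℕ} (v w : KVar K r0 r1) : Prop :=
  v.1 < w.1 ∨ (v.1 = w.1 ∧ (v.2.1 < w.2.1 ∨ (v.2.1 = w.2.1 ∧ v.2.2 < w.2.2)))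

/-- The monomial with exponent vector `a` is smaller than the one with exponent
vector `b` in the lexicographic term order: at the most significant variable
where they differ, `a` has the smaller exponent. -/
def MonLT {K r0 r1 : ℕ} (a b : KVar K r0 r1 →₀ ℕ) : Prop :=
  ∃ v, a v < b v ∧ ∀ w, VarGT w v → a w = b w

/-- `mo` is the leading monomial (exponent vector) of `f`. -/
def IsLM {K r0 r1 : ℕ} (f : KPoly K r0 r1) (mo : KVar K r0 r1 →₀ ℕ) : Prop :=
  mo ∈ f.support ∧ ∀ m' ∈ f.support, m' = mo ∨ MonLT m' mo

/-- The substitution action of a pair of matrices `(g, h)` on the coordinate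
ring: `x^i_{jk} ↦ ∑ (h⁻¹)_{j j'} x^i_{j'k'} g_{k' k}`, i.e. `M_i ↦ h⁻¹ M_i g`. -/
noncomputable def glAct {K r0 r1 : ℕ} (g : Matrix (Fin r0) (Fin r0) ℂ)
    (h : Matrix (Fin r1) (Fin r1) ℂ) : KPoly K r0 r1 →ₐ[ℂ] KPoly K r0 r1 :=
  MvPolynomial.aeval fun v : KVar K r0 r1 =>
    ∑ j' : Fin r1, ∑ k' : Fin r0,
      MvPolynomial.C (h⁻¹ v.2.1 j' * g k' v.2.2) * MvPolynomial.X (v.1, j', k')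

/-- `f` is a semi-invariant of weight `(w0, w1)`. -/
def IsSemiInvariant {K r0 r1 : ℕ} (f : KPoly K r0 r1) (w0 w1 : ℤ) : Prop :=
  ∀ (g : Matrix (Fin r0) (Fin r0) ℂ) (h : Matrix (Fin r1) (Fin r1) ℂ),
    IsUnit g.det → IsUnit h.det →
      glAct g h f = MvPolynomial.C (g.det ^ w0 * h.det ^ w1) * f

/-- The semi-invariant ring: the linear span of all semi-invariants. -/
noncomputable def semiInvariantRing (K r0 r1 : ℕ) : Submodule ℂ (KPoly K r0 r1) :=
  Submodule.span ℂ {f | ∃ w0 w1 : ℤ, IsSemiInvariant f w0 w1}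

/-- A linked tableaux pair for the generalized Kronecker quiver:
`Tm` is the tableau `T⁻` (with `r0` rows and `cm` columns, labels `(i,q)`),
`Tp` is the tableau `T⁺` (with `r1` rows and `cp` columns, labels `(i,p)`),
and `link` is a bijection of boxes sending the box labeled `(i,q)` in row `p`
of `T⁻` to a box labeled `(i,p)` lying in row `q` of `T⁺`. -/
structure LinkedPair (K r0 r1 cm cp : ℕ) where
  Tm : Fin r0 → Fin cm → Fin K × Fin r1
  Tp : Fin r1 → Fin cp → Fin K × Fin r0
  link : Fin r0 × Fin cm ≃ Fin r1 × Fin cp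
  link_row : ∀ p c, (link (p, c)).1 = (Tm p c).2
  link_label : ∀ p c, Tp (link (p, c)).1 (link (p, c)).2 = ((Tm p c).1, p)

/-- The exponent vector of `Mon(T⁺)`: a box labeled `(i,k)` in row `q` of `T⁺`
contributes the variable `x^i_{qk}`. -/
noncomputable def monExpP {K r0 r1 cm cp : ℕ} (L : LinkedPair K r0 r1 cm cp) :
    KVar K r0 r1 →₀ ℕ :=
  ∑ q : Fin r1, ∑ c : Fin cp, Finsupp.single ((L.Tp q c).1, q, (L.Tp q c).2) 1

/-- The exponent vector of `Mon(T⁻)`: a box labeled `(i,j)` in row `p` of `T⁻`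
contributes the variable `x^i_{jp}`. -/
noncomputable def monExpM {K r0 r1 cm cp : ℕ} (L : LinkedPair K r0 r1 cm cp) :
    KVar K r0 r1 →₀ ℕ :=
  ∑ p : Fin r0, ∑ c : Fin cm, Finsupp.single ((L.Tm p c).1, (L.Tm p c).2, p) 1

/-- The semi-invariant `f_{T^±}` attached to a linked tableaux pair:
`∑_{α⁻, α⁺} sign(α⁻) sign(α⁺) Mon(α⁻ · α⁺ · T⁺)`, where `α⁺` permutes the
entries of each column of `T⁺` among its rows and `α⁻` permutes the second
entries of the labels of the boxes of `T⁺` linked to each column of `T⁻`. -/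
noncomputable def pairPoly {K r0 r1 cm cp : ℕ} (L : LinkedPair K r0 r1 cm cp) :
    KPoly K r0 r1 :=
  ∑ αm : Fin cm → Equiv.Perm (Fin r0), ∑ αp : Fin cp → Equiv.Perm (Fin r1),
    ((∏ l, (Equiv.Perm.sign (αm l) : ℤ)) * ∏ c, (Equiv.Perm.sign (αp c) : ℤ)) •
      ∏ p : Fin r0, ∏ l : Fin cm,
        MvPolynomial.X
          ((L.Tm p l).1, αp (L.link (p, l)).2 (L.link (p, l)).1, αm l p)

/-- The order on labels: `(i,p) ≤ (j,q)` iff `i < j`, or `i = j` and `p ≤ q`. -/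
def LabelLE {K n : ℕ} (a b : Fin K × Fin n) : Prop :=
  a.1 < b.1 ∨ (a.1 = b.1 ∧ a.2 ≤ b.2)

/-- Strict version of the label order. -/
def LabelLT {K n : ℕ} (a b : Fin K × Fin n) : Prop :=
  a.1 < b.1 ∨ (a.1 = b.1 ∧ a.2 < b.2)

/-- A rectangular tableau is semi-standard if its entries are weakly increasing
along each row and strictly increasing down each column. -/
def IsSemiStandardTab {rows cols K n : ℕ}
    (T : Fin rows → Fin cols → Fin K × Fin n) : Prop :=
  (∀ (i : Fin rows) (c c' : Fin cols), c ≤ c' → LabelLE (T i c) (T i c')) ∧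
  (∀ (c : Fin cols) (i i' : Fin rows), i < i' → LabelLT (T i c) (T i' c))

/-- The link is semi-standard: boxes with equal labels in the same row of `T⁻`
are matched with their partners in `T⁺` in a left-to-right
order-preserving way. -/
def IsSemiStandardLink {K r0 r1 cm cp : ℕ}
    (L : LinkedPair K r0 r1 cm cp) : Prop :=
  ∀ (p : Fin r0) (c c' : Fin cm), L.Tm p c = L.Tm p c' → c < c' →
    (L.link (p, c)).2 < (L.link (p, c')).2

/-- A semi-standard linked tableaux pair: both tableaux and the link are
semi-standard. -/
def IsSemiStandardPair {K r0 r1 cm cp : ℕ}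
    (L : LinkedPair K r0 r1 cm cp) : Prop :=
  IsSemiStandardTab L.Tm ∧ IsSemiStandardTab L.Tp ∧ IsSemiStandardLink L

/-- A (nonempty) semi-standard linked tableaux pair is primitive if its leading
monomial is not the product of the leading monomials of two (nonempty)
semi-standard linked tableaux pairs. -/
def IsPrimitive {K r0 r1 cm cp : ℕ} (L : LinkedPair K r0 r1 cm cp) : Prop :=
  IsSemiStandardPair L ∧ 0 < cm ∧
    ¬∃ (cm1 cp1 cm2 cp2 : ℕ) (L1 : LinkedPair K r0 r1 cm1 cp1)
        (L2 : LinkedPair K r0 r1 cm2 cp2) (m m1 m2 : KVar K r0 r1 →₀ ℕ),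
        0 < cm1 ∧ 0 < cm2 ∧ IsSemiStandardPair L1 ∧ IsSemiStandardPair L2 ∧
        IsLM (pairPoly L) m ∧ IsLM (pairPoly L1) m1 ∧ IsLM (pairPoly L2) m2 ∧
        m = m1 + m2

/-!
The leading monomial of `f_{T^±}` is `Mon(T⁺)` for a semi-standard pair, and an exponent vector `m`
occurs in this way iff both `m` and its transpose satisfy a ballot condition, namely that the slack
of `T⁺` and that of `T⁻` have no negative value. A pair is therefore primitive only if `m` is not
a sum of two nonzero vectors of this kind. The bound `x - y < t` follows from the ballot condition
for `T⁻` alone. Suppose `y - x ≥ t` and let `α` be the first entry of the label of `B`. Then the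
slack of `T⁻` is at least `2` at all positions from `2α + 1` to `2β`, for some `β ≥ α` such that
both `x^α_{11}` and `x^β_{22}` occur in `Mon(T⁺)`. By primitivity `x^α_{11} x^β_{22}` cannot be
split off, so the slack of `T⁺` vanishes somewhere in this range. Next to its first and last zeros
one finds variables `x^ν_{21}` and `x^μ_{12}` with `α < ν ≤ μ < β`, and then
`x^α_{11} x^β_{22} x^μ_{12} x^ν_{21}` can be split off, a contradiction.
-/

open Finset

section Labels

variable {K n : ℕ} {a b : Fin K × Fin n}

theorem LabelLE.fst_le (h : LabelLE a b) : a.1 ≤ b.1 :=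
  h.elim le_of_lt fun h => h.1.le

theorem LabelLE.fst_lt (h : LabelLE a b) (hab : b.2 < a.2) : a.1 < b.1 :=
  h.resolve_right fun h => h.2.not_gt hab

theorem LabelLT.fst_le (h : LabelLT a b) : a.1 ≤ b.1 :=
  h.elim le_of_lt fun h => h.1.le

theorem LabelLT.fst_lt (h : LabelLT a b) (hab : b.2 ≤ a.2) : a.1 < b.1 :=
  h.resolve_right fun h => h.2.not_ge hab

end Labels

section Tableaux

variable {K r0 r1 cm cp : ℕ}

/-- The exponent vector of `Mon(T)` for an arbitrary rectangular tableau `T`, so that `monExpP L` is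
`tabExp L.Tp`. -/
noncomputable def tabExp (T : Fin r1 → Fin cp → Fin K × Fin r0) : KVar K r0 r1 →₀ ℕ :=
  ∑ q, ∑ c, Finsupp.single ((T q c).1, q, (T q c).2) 1

theorem tabExp_apply (T : Fin r1 → Fin cp → Fin K × Fin r0) (i : Fin K) (q : Fin r1)
    (k : Fin r0) : tabExp T (i, q, k) = #{c | T q c = (i, k)} := by
  simp only [tabExp, Finsupp.finsetSum_apply, Finsupp.single_apply, Prod.mk.injEq,
    and_left_comm (b := _ = q), ← Prod.ext_iff (y := (i, k))]
  rw [sum_eq_single q (fun p _ hp => by simp [hp]) (by simp), card_filter]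
  simp [Prod.ext_iff]

theorem sum_tabExp_fst (T : Fin r1 → Fin cp → Fin K × Fin r0) (i : Fin K) (q : Fin r1) :
    ∑ k, tabExp T (i, q, k) = #{c | (T q c).1 = i} := by
  simp only [tabExp_apply, Prod.ext_iff, ← filter_filter]
  simpa using sum_card_fiberwise_eq_card_filter {c | (T q c).1 = i} univ fun c => (T q c).2

/-- The relabelling of exponents `x^i_{qk} ↦ x^i_{kq}`, which exchanges the roles of the two
tableaux of a linked pair. -/
noncomputable def transposeExp : (KVar K r0 r1 →₀ ℕ) ≃+ (KVar K r1 r0 →₀ ℕ) :=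
  Finsupp.domCongr ((Equiv.refl _).prodCongr (Equiv.prodComm _ _))

@[simp]
theorem transposeExp_apply (m : KVar K r0 r1 →₀ ℕ) (i : Fin K) (q : Fin r1) (k : Fin r0) :
    transposeExp m (i, k, q) = m (i, q, k) :=
  rfl

@[simp]
theorem transposeExp_single (i : Fin K) (q : Fin r1) (k : Fin r0) (n : ℕ) :
    transposeExp (Finsupp.single (i, q, k) n) = Finsupp.single (i, k, q) n :=
  Finsupp.equivMapDomain_single ..

namespace LinkedPair

theorem link_symm_row (L : LinkedPair K r0 r1 cm cp) (q : Fin r1) (c : Fin cp) :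
    (L.link.symm (q, c)).1 = (L.Tp q c).2 := by
  simpa using (congrArg Prod.snd
    (L.link_label (L.link.symm (q, c)).1 (L.link.symm (q, c)).2)).symm

theorem link_symm_label (L : LinkedPair K r0 r1 cm cp) (q : Fin r1) (c : Fin cp) :
    L.Tm (L.link.symm (q, c)).1 (L.link.symm (q, c)).2 = ((L.Tp q c).1, q) := by
  have hlabel := L.link_label (L.link.symm (q, c)).1 (L.link.symm (q, c)).2
  have hrow := L.link_row (L.link.symm (q, c)).1 (L.link.symm (q, c)).2
  rw [Prod.mk.eta, Equiv.apply_symm_apply] at hlabel hrow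
  exact Prod.ext (congrArg Prod.fst hlabel).symm hrow.symm

/-- The linked pair with `T⁻` and `T⁺` exchanged. -/
def dual (L : LinkedPair K r0 r1 cm cp) : LinkedPair K r1 r0 cp cm where
  Tm := L.Tp
  Tp := L.Tm
  link := L.link.symm
  link_row := L.link_symm_row
  link_label := L.link_symm_label

theorem Tp_link_fst (L : LinkedPair K r0 r1 cm cp) (B : Fin r0 × Fin cm) :
    (L.Tp (L.link B).1 (L.link B).2).1 = (L.Tm B.1 B.2).1 :=
  congrArg Prod.fst (L.link_label B.1 B.2)

/-- The tableau `α⁻ · α⁺ · T⁺` of a term of the semi-invariant. -/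
def permTab (L : LinkedPair K r0 r1 cm cp) (αm : Fin cm → Equiv.Perm (Fin r0))
    (αp : Fin cp → Equiv.Perm (Fin r1)) (q : Fin r1) (c : Fin cp) : Fin K × Fin r0 :=
  ((L.Tp ((αp c).symm q) c).1,
    αm (L.link.symm ((αp c).symm q, c)).2 (L.link.symm ((αp c).symm q, c)).1)

variable (L : LinkedPair K r0 r1 cm cp) (αm : Fin cm → Equiv.Perm (Fin r0))
  (αp : Fin cp → Equiv.Perm (Fin r1))

theorem permTab_one : L.permTab 1 1 = L.Tp := by
  funext q c
  exact Prod.ext rfl (L.link_symm_row q c)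

variable {αp} in
theorem permTab_of_eq_one {c : Fin cp} (hc : αp c = 1) (q : Fin r1) :
    L.permTab αm αp q c = ((L.Tp q c).1, αm (L.link.symm (q, c)).2 (L.Tp q c).2) := by
  rw [← L.link_symm_row q c]
  simp only [permTab, hc]
  rfl

theorem tabExp_permTab : tabExp (L.permTab αm αp) = ∑ B : Fin r0 × Fin cm,
    Finsupp.single ((L.Tm B.1 B.2).1, αp (L.link B).2 (L.link B).1, αm B.2 B.1) 1 := by
  let term (C : Fin r1 × Fin cp) : KVar K r0 r1 →₀ ℕ :=
    Finsupp.single ((L.Tp C.1 C.2).1, αp C.2 C.1, αm (L.link.symm C).2 (L.link.symm C).1) 1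
  calc tabExp (L.permTab αm αp)
      = ∑ c, ∑ q, Finsupp.single ((L.permTab αm αp q c).1, q, (L.permTab αm αp q c).2) 1 :=
        sum_comm
    _ = ∑ c, ∑ q, term (q, c) :=
        sum_congr rfl fun c _ => by
          rw [← Equiv.sum_comp (αp c)]
          simp only [permTab, Equiv.symm_apply_apply, term]
    _ = ∑ C, term C := (Fintype.sum_prod_type_right _).symm
    _ = ∑ B, term (L.link B) := (Equiv.sum_comp _ _).symm
    _ = _ := by simp only [term, L.Tp_link_fst, Equiv.symm_apply_apply]

theorem tabExp_permTab_dual :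
    tabExp (L.dual.permTab αp αm) = transposeExp (tabExp (L.permTab αm αp)) := by
  rw [tabExp_permTab, tabExp_permTab, map_sum, ← Equiv.sum_comp L.link]
  refine sum_congr rfl fun B _ => ?_
  rw [transposeExp_single]
  simp [dual, Tp_link_fst]

theorem tabExp_dual_Tp : tabExp L.dual.Tp = transposeExp (tabExp L.Tp) := by
  have h := L.tabExp_permTab_dual 1 1
  rwa [permTab_one, permTab_one] at h

/-- The sign of a term of the semi-invariant. -/
def termSign {r0 r1 cm cp : ℕ} (αm : Fin cm → Equiv.Perm (Fin r0))
    (αp : Fin cp → Equiv.Perm (Fin r1)) : ℤˣ :=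
  (∏ l, Equiv.Perm.sign (αm l)) * ∏ c, Equiv.Perm.sign (αp c)

theorem pairPoly_eq_sum : pairPoly L =
    ∑ α : (Fin cm → Equiv.Perm (Fin r0)) × (Fin cp → Equiv.Perm (Fin r1)),
      MvPolynomial.monomial (tabExp (L.permTab α.1 α.2)) ((termSign α.1 α.2 : ℤ) : ℂ) := by
  rw [pairPoly, Fintype.sum_prod_type]
  refine sum_congr rfl fun αm _ => sum_congr rfl fun αp _ => ?_
  rw [tabExp_permTab, ← mul_one ((termSign αm αp : ℤ) : ℂ), ← zsmul_eq_mul,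
    ← MvPolynomial.smul_monomial, MvPolynomial.monomial_sum_one, Fintype.prod_prod_type]
  simp [termSign, MvPolynomial.X]

theorem isLM_pairPoly_of_forall
    (hle : ∀ αm αp, tabExp (L.permTab αm αp) = tabExp L.Tp ∨
      MonLT (tabExp (L.permTab αm αp)) (tabExp L.Tp))
    (hsign : ∀ αm αp, tabExp (L.permTab αm αp) = tabExp L.Tp → termSign αm αp = 1) :
    IsLM (pairPoly L) (tabExp L.Tp) := by
  classical
  have hcoeff (m : KVar K r0 r1 →₀ ℕ) : (pairPoly L).coeff m =
      ∑ α : (Fin cm → Equiv.Perm (Fin r0)) × (Fin cp → Equiv.Perm (Fin r1)),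
        if tabExp (L.permTab α.1 α.2) = m then ((termSign α.1 α.2 : ℤ) : ℂ) else 0 := by
    simp only [pairPoly_eq_sum, MvPolynomial.coeff_sum, MvPolynomial.coeff_monomial]
  refine ⟨?_, fun m hm => ?_⟩
  · have hcard : (pairPoly L).coeff (tabExp L.Tp) =
        #{α : (Fin cm → Equiv.Perm (Fin r0)) × (Fin cp → Equiv.Perm (Fin r1)) |
          tabExp (L.permTab α.1 α.2) = tabExp L.Tp} := by
      rw [hcoeff, card_filter, Nat.cast_sum]
      refine sum_congr rfl fun α _ => ?_
      split_ifs with h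
      · simp [hsign _ _ h]
      · simp
    rw [MvPolynomial.mem_support_iff, hcard, Nat.cast_ne_zero]
    exact card_ne_zero_of_mem (mem_filter.2 ⟨mem_univ (1, 1), congrArg tabExp L.permTab_one⟩)
  · rw [MvPolynomial.mem_support_iff, hcoeff] at hm
    obtain ⟨α, -, hα⟩ := exists_ne_zero_of_sum_ne_zero hm
    obtain rfl := (ite_ne_right_iff.1 hα).1
    exact hle α.1 α.2

end LinkedPair

end Tableaux

section LeadingMonomial

theorem varGT_iff_toLex_lt {K r0 r1 : ℕ} {v w : KVar K r0 r1} :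
    VarGT w v ↔ toLex (w.1, toLex w.2) < toLex (v.1, toLex v.2) := by
  simp only [VarGT, Prod.Lex.lt_iff, ofLex_toLex]

theorem exists_ne_forall_varGT_eq {K r0 r1 : ℕ} {m m' : KVar K r0 r1 →₀ ℕ} (h : m ≠ m') :
    ∃ v, m v ≠ m' v ∧ ∀ w, VarGT w v → m w = m' w := by
  obtain ⟨u, hu⟩ := DFunLike.ne_iff.1 h
  obtain ⟨v, hv, hmin⟩ := exists_min_image {v | m v ≠ m' v}
    (fun v : KVar K r0 r1 => toLex (v.1, toLex v.2)) ⟨u, mem_filter.2 ⟨mem_univ u, hu⟩⟩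
  refine ⟨v, (mem_filter.1 hv).2, fun w hw => by_contra fun hne => ?_⟩
  exact (hmin w (mem_filter.2 ⟨mem_univ w, hne⟩)).not_gt (varGT_iff_toLex_lt.1 hw)

theorem perm_fin_two_eq_one_iff {σ : Equiv.Perm (Fin 2)} : σ = 1 ↔ σ 0 = 0 := by
  revert σ
  decide

theorem perm_fin_two_eq_of_iff {σ τ : Equiv.Perm (Fin 2)} (h : σ = 1 ↔ τ = 1) : σ = τ := by
  revert σ τ
  decide

section Fibers

variable {ι κ : Type*} [Fintype ι] [LinearOrder κ] {t t' : ι → κ}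

theorem fiber_subset_of_forall_lt (hle : t ≤ t') {i : κ} (hlt : ∀ c, t c < i → t' c = t c) :
    ({c | t' c = i} : Finset ι) ⊆ ({c | t c = i} : Finset ι) := by
  intro c hc
  obtain rfl := (mem_filter.1 hc).2
  exact mem_filter.2 ⟨mem_univ c, (hle c).eq_of_not_lt fun h => h.ne' (hlt c h)⟩

theorem eq_of_card_fiber_eq [WellFoundedLT κ] (hle : t ≤ t') (c : ι)
    (hcard : ∀ i ≤ t c, #{x | t' x = i} = #{x | t x = i}) : t' c = t c := by
  induction hi : t c using WellFoundedLT.induction generalizing c with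
  | ind i ih =>
    subst hi
    have hsub := fiber_subset_of_forall_lt hle fun x hx =>
      ih (t x) hx x (fun i hi => hcard i (hi.trans hx.le)) rfl
    have heq := eq_of_subset_of_card_le hsub (hcard _ le_rfl).ge
    exact (mem_filter.1 (heq.symm.subset (mem_filter.2 ⟨mem_univ c, rfl⟩))).2

theorem fiber_subset_of_card_fiber_eq [WellFoundedLT κ] (hle : t ≤ t') {i : κ}
    (hcard : ∀ j < i, #{c | t' c = j} = #{c | t c = j}) :
    ({c | t' c = i} : Finset ι) ⊆ ({c | t c = i} : Finset ι) :=
  fiber_subset_of_forall_lt hle fun c hc =>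
    eq_of_card_fiber_eq hle c fun j hj => hcard j (hj.trans_lt hc)

end Fibers

namespace LinkedPair

variable {K r0 r1 cm cp : ℕ}

theorem sum_tabExp_permTab (L : LinkedPair K r0 r1 cm cp) (αm : Fin cm → Equiv.Perm (Fin r0))
    (αp : Fin cp → Equiv.Perm (Fin r1)) (i : Fin K) :
    ∑ q, ∑ k, tabExp (L.permTab αm αp) (i, q, k) = ∑ q, ∑ k, tabExp L.Tp (i, q, k) := by
  simp only [sum_tabExp_fst, card_filter]
  simp only [permTab]
  rw [sum_comm, sum_comm (s := univ (α := Fin r1))]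
  exact sum_congr rfl fun c _ =>
    Equiv.sum_comp (αp c).symm fun q => if (L.Tp q c).1 = i then 1 else 0

variable {L : LinkedPair K 2 2 cm cp} {αm : Fin cm → Equiv.Perm (Fin 2)}
  {αp : Fin cp → Equiv.Perm (Fin 2)} {i : Fin K}

theorem fst_le_permTab_fst (hTp : ∀ c, LabelLT (L.Tp 0 c) (L.Tp 1 c)) :
    (fun c => (L.Tp 0 c).1) ≤ fun c => (L.permTab αm αp 0 c).1 := by
  intro c
  change (L.Tp 0 c).1 ≤ (L.Tp ((αp c).symm 0) c).1
  obtain h | h : (αp c).symm 0 = 0 ∨ (αp c).symm 0 = 1 := by omega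
  · rw [h]
  · rw [h]
    exact (hTp c).fst_le

theorem card_permTab_fst_eq
    (h : ∀ k, tabExp (L.permTab αm αp) (i, 0, k) = tabExp L.Tp (i, 0, k)) :
    #{c | (L.permTab αm αp 0 c).1 = i} = #{c | (L.Tp 0 c).1 = i} := by
  rw [← sum_tabExp_fst, ← sum_tabExp_fst]
  exact sum_congr rfl fun k _ => h k

theorem permTab_top_fst_eq (hTp : ∀ c, LabelLT (L.Tp 0 c) (L.Tp 1 c)) (c : Fin cp)
    (h : ∀ j ≤ (L.Tp 0 c).1, ∀ k, tabExp (L.permTab αm αp) (j, 0, k) = tabExp L.Tp (j, 0, k)) :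
    (L.permTab αm αp 0 c).1 = (L.Tp 0 c).1 :=
  eq_of_card_fiber_eq (fst_le_permTab_fst hTp) c fun j hj => card_permTab_fst_eq (h j hj)

theorem filter_permTab_fst_subset (hTp : ∀ c, LabelLT (L.Tp 0 c) (L.Tp 1 c))
    (h : ∀ j < i, ∀ k, tabExp (L.permTab αm αp) (j, 0, k) = tabExp L.Tp (j, 0, k)) :
    ({c | (L.permTab αm αp 0 c).1 = i} : Finset (Fin cp)) ⊆ ({c | (L.Tp 0 c).1 = i} : Finset _) :=
  fiber_subset_of_card_fiber_eq (fst_le_permTab_fst hTp) fun j hj => card_permTab_fst_eq (h j hj)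

theorem sum_tabExp_permTab_le (hTp : ∀ c, LabelLT (L.Tp 0 c) (L.Tp 1 c))
    (h : ∀ j < i, ∀ k, tabExp (L.permTab αm αp) (j, 0, k) = tabExp L.Tp (j, 0, k)) :
    ∑ k, tabExp (L.permTab αm αp) (i, 0, k) ≤ ∑ k, tabExp L.Tp (i, 0, k) := by
  rw [sum_tabExp_fst, sum_tabExp_fst]
  exact card_le_card (filter_permTab_fst_subset hTp h)

theorem perm_eq_one_of_snd_eq_one (hTp : ∀ c, LabelLT (L.Tp 0 c) (L.Tp 1 c)) {c : Fin cp}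
    (hc : (L.Tp 0 c).2 = 1) (hfst : (L.permTab αm αp 0 c).1 = (L.Tp 0 c).1) : αp c = 1 := by
  have hlt : (L.Tp 0 c).1 < (L.Tp 1 c).1 := (hTp c).fst_lt ((Fin.le_last _).trans_eq hc.symm)
  have hzero : (αp c).symm 0 = 0 := by
    by_contra h0
    have h1 : (αp c).symm 0 = 1 := by omega
    rw [permTab, h1] at hfst
    exact hlt.ne' hfst
  exact perm_fin_two_eq_one_iff.2 ((Equiv.symm_apply_eq _).1 hzero).symm

theorem filter_permTab_subset (hTp : ∀ c, LabelLT (L.Tp 0 c) (L.Tp 1 c))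
    (hTm : ∀ c, LabelLT (L.Tm 0 c) (L.Tm 1 c))
    (h : ∀ j < i, ∀ q k, tabExp (L.permTab αm αp) (j, q, k) = tabExp L.Tp (j, q, k)) :
    ({c | L.permTab αm αp 0 c = (i, 0)} : Finset (Fin cp)) ⊆
      ({c | L.Tp 0 c = (i, 0)} : Finset _) := by
  intro c hc
  replace hc := (mem_filter.1 hc).2
  have hi : (L.Tp 0 c).1 = i := (mem_filter.1 (filter_permTab_fst_subset hTp (fun j hj => h j hj 0)
    (mem_filter.2 ⟨mem_univ c, congrArg Prod.fst hc⟩))).2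
  refine mem_filter.2 ⟨mem_univ c, Prod.ext hi (by_contra fun hk => ?_)⟩
  replace hk : (L.Tp 0 c).2 = 1 := by dsimp only at hk; omega
  have hαp := perm_eq_one_of_snd_eq_one hTp hk ((congrArg Prod.fst hc).trans hi.symm)
  set l := (L.link.symm (0, c)).2
  have hlabel : L.Tm 1 l = (i, 0) := by
    rw [← hk, ← hi, ← L.link_symm_row]
    exact L.link_symm_label 0 c
  have hαm : (αm l).symm 0 = 1 := by
    rw [permTab_of_eq_one L αm hαp, hk] at hc
    exact (Equiv.symm_apply_eq _).2 (congrArg Prod.snd hc).symm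
  have hl : (L.Tm 0 l).1 = i :=
    (mem_filter.1 (filter_permTab_fst_subset (L := L.dual) (αm := αp) (αp := αm) hTm
      (fun j hj k => by simp only [tabExp_permTab_dual, tabExp_dual_Tp, transposeExp_apply, h j hj])
      (mem_filter.2 ⟨mem_univ l, by simp [permTab, hαm, dual, hlabel]⟩))).2
  have hlt := (hTm l).fst_lt (by simp [hlabel])
  rw [hl, hlabel] at hlt
  exact hlt.false

theorem tabExp_permTab_le (hTp : ∀ c, LabelLT (L.Tp 0 c) (L.Tp 1 c))
    (hTm : ∀ c, LabelLT (L.Tm 0 c) (L.Tm 1 c)) {v : KVar K 2 2}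
    (h : ∀ w, VarGT w v → tabExp (L.permTab αm αp) w = tabExp L.Tp w) :
    tabExp (L.permTab αm αp) v ≤ tabExp L.Tp v := by
  obtain ⟨i, q, k⟩ := v
  have hlt (j : Fin K) (hj : j < i) (q k : Fin 2) :
      tabExp (L.permTab αm αp) (j, q, k) = tabExp L.Tp (j, q, k) := h _ (Or.inl hj)
  have hrow := sum_tabExp_permTab_le hTp fun j hj => hlt j hj 0
  have hcol : ∑ q, tabExp (L.dual.permTab αp αm) (i, 0, q) ≤ ∑ q, tabExp L.dual.Tp (i, 0, q) :=
    sum_tabExp_permTab_le hTm fun j hj k => by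
      simp only [tabExp_permTab_dual, tabExp_dual_Tp, transposeExp_apply, hlt j hj]
  have htotal := L.sum_tabExp_permTab αm αp i
  have hcorner := card_le_card (filter_permTab_subset hTp hTm hlt)
  rw [← tabExp_apply, ← tabExp_apply] at hcorner
  simp only [tabExp_permTab_dual, tabExp_dual_Tp, transposeExp_apply, Fin.sum_univ_two]
    at hrow hcol htotal
  have hEq (q' k' : Fin 2) (hqk : q' < q ∨ q' = q ∧ k' < k) :
      tabExp (L.permTab αm αp) (i, q', k') = tabExp L.Tp (i, q', k') := h _ (Or.inr ⟨rfl, hqk⟩)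
  obtain rfl | rfl : q = 0 ∨ q = 1 := by omega
  · obtain rfl | rfl : k = 0 ∨ k = 1 := by omega
    · exact hcorner
    · have h00 := hEq 0 0 (by decide)
      omega
  · obtain rfl | rfl : k = 0 ∨ k = 1 := by omega
    · have h00 := hEq 0 0 (by decide)
      omega
    · have h00 := hEq 0 0 (by decide)
      have h01 := hEq 0 1 (by decide)
      have h10 := hEq 1 0 (by decide)
      omega

theorem permTab_top_eq (hTp : ∀ c, LabelLT (L.Tp 0 c) (L.Tp 1 c))
    (hTm : ∀ c, LabelLT (L.Tm 0 c) (L.Tm 1 c))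
    (h : tabExp (L.permTab αm αp) = tabExp L.Tp) {c : Fin cp} (hc : (L.Tp 0 c).2 = 0) :
    L.permTab αm αp 0 c = L.Tp 0 c := by
  have hsub :=
    filter_permTab_subset (i := (L.Tp 0 c).1) hTp hTm fun _ _ _ _ => DFunLike.congr_fun h _
  have heq := eq_of_subset_of_card_le hsub (by rw [← tabExp_apply, ← tabExp_apply, h])
  have hlabel : L.Tp 0 c = ((L.Tp 0 c).1, 0) := Prod.ext rfl hc
  exact (mem_filter.1 (heq.symm.subset (mem_filter.2 ⟨mem_univ c, hlabel⟩))).2.trans hlabel.symm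

theorem tabExp_permTab_dual_eq (h : tabExp (L.permTab αm αp) = tabExp L.Tp) :
    tabExp (L.dual.permTab αp αm) = tabExp L.dual.Tp := by
  rw [tabExp_permTab_dual, h, tabExp_dual_Tp]

theorem link_zero_link_symm {c : Fin cp} (hc : (L.Tp 0 c).2 = 0) :
    L.link (0, (L.link.symm (0, c)).2) = (0, c) := by
  have hrow := (L.link_symm_row 0 c).trans hc
  rw [← Equiv.eq_symm_apply]
  exact Prod.ext hrow.symm rfl

theorem Tm_zero_link_symm {c : Fin cp} (hc : (L.Tp 0 c).2 = 0) :
    L.Tm 0 (L.link.symm (0, c)).2 = ((L.Tp 0 c).1, 0) := by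
  have hlabel := L.link_symm_label 0 c
  rwa [L.link_symm_row, hc] at hlabel

theorem perm_link_symm_eq_one (hTp : ∀ c, LabelLT (L.Tp 0 c) (L.Tp 1 c))
    (hTm : ∀ c, LabelLT (L.Tm 0 c) (L.Tm 1 c))
    (h : tabExp (L.permTab αm αp) = tabExp L.Tp) {c : Fin cp} (hc : (L.Tp 0 c).2 = 0)
    (hα : αp c = 1) : αm (L.link.symm (0, c)).2 = 1 := by
  have hsnd := congrArg Prod.snd (permTab_top_eq hTp hTm h hc)
  rw [permTab_of_eq_one L αm hα, hc] at hsnd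
  exact perm_fin_two_eq_one_iff.2 hsnd

theorem perm_link_symm_eq (hTp : ∀ c, LabelLT (L.Tp 0 c) (L.Tp 1 c))
    (hTm : ∀ c, LabelLT (L.Tm 0 c) (L.Tm 1 c))
    (h : tabExp (L.permTab αm αp) = tabExp L.Tp) {c : Fin cp} (hc : (L.Tp 0 c).2 = 0) :
    αm (L.link.symm (0, c)).2 = αp c := by
  have hdual := tabExp_permTab_dual_eq h
  refine perm_fin_two_eq_of_iff ⟨fun hα => ?_, perm_link_symm_eq_one hTp hTm h hc⟩
  have hback : αp (L.link (0, (L.link.symm (0, c)).2)).2 = 1 :=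
    perm_link_symm_eq_one (L := L.dual) hTm hTp hdual
      (congrArg Prod.snd (Tm_zero_link_symm hc)) hα
  rwa [link_zero_link_symm hc] at hback

theorem snd_eq_zero_of_perm_ne_one (hTp : ∀ c, LabelLT (L.Tp 0 c) (L.Tp 1 c))
    (h : tabExp (L.permTab αm αp) = tabExp L.Tp) {c : Fin cp} (hα : αp c ≠ 1) :
    (L.Tp 0 c).2 = 0 :=
  by_contra fun h0 => hα <| perm_eq_one_of_snd_eq_one hTp (Fin.eq_one_of_ne_zero _ h0) <|
    permTab_top_fst_eq hTp c fun _ _ _ => DFunLike.congr_fun h _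

theorem prod_sign_eq_prod_filter (hTp : ∀ c, LabelLT (L.Tp 0 c) (L.Tp 1 c))
    (h : tabExp (L.permTab αm αp) = tabExp L.Tp) :
    ∏ c, Equiv.Perm.sign (αp c) = ∏ c with (L.Tp 0 c).2 = 0, Equiv.Perm.sign (αp c) :=
  (prod_filter_of_ne fun _ _ hc => snd_eq_zero_of_perm_ne_one hTp h fun hα =>
    hc (hα ▸ Equiv.Perm.sign_one)).symm

theorem termSign_eq_one (hTp : ∀ c, LabelLT (L.Tp 0 c) (L.Tp 1 c))
    (hTm : ∀ c, LabelLT (L.Tm 0 c) (L.Tm 1 c)) (h : tabExp (L.permTab αm αp) = tabExp L.Tp) :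
    termSign αm αp = 1 := by
  have hdual := tabExp_permTab_dual_eq h
  -- Linked columns with a label `(i, 1)` on top carry the same permutation, others the identity.
  have heq : ∏ l, Equiv.Perm.sign (αm l) = ∏ c, Equiv.Perm.sign (αp c) := by
    rw [prod_sign_eq_prod_filter hTp h, prod_sign_eq_prod_filter (L := L.dual) hTm hdual]
    refine prod_nbij' (fun l => (L.link (0, l)).2) (fun c => (L.link.symm (0, c)).2) ?_ ?_ ?_ ?_ ?_
    all_goals simp only [mem_filter, mem_univ, true_and]
    · exact fun l hl => congrArg Prod.snd (Tm_zero_link_symm (L := L.dual) hl)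
    · exact fun c hc => congrArg Prod.snd (Tm_zero_link_symm hc)
    · exact fun l hl => congrArg Prod.snd (link_zero_link_symm (L := L.dual) hl)
    · exact fun c hc => congrArg Prod.snd (link_zero_link_symm hc)
    · exact fun l hl =>
        congrArg Equiv.Perm.sign (perm_link_symm_eq (L := L.dual) hTm hTp hdual hl).symm
  rw [termSign, heq, Int.units_mul_self]

theorem isLM_pairPoly (hTp : ∀ c, LabelLT (L.Tp 0 c) (L.Tp 1 c))
    (hTm : ∀ c, LabelLT (L.Tm 0 c) (L.Tm 1 c)) : IsLM (pairPoly L) (tabExp L.Tp) := by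
  refine L.isLM_pairPoly_of_forall (fun αm αp => or_iff_not_imp_left.2 fun hne => ?_)
    fun αm αp h => ?_
  · obtain ⟨v, hv, hvar⟩ := exists_ne_forall_varGT_eq hne
    exact ⟨v, (tabExp_permTab_le hTp hTm hvar).lt_of_ne hv, hvar⟩
  · exact termSign_eq_one hTp hTm h

end LinkedPair

end LeadingMonomial

section Content

variable {K : ℕ}

/-- The position of a label in the label order `(1,1) < (1,2) < (2,1) < ⋯`. -/
def labelPos (a : Fin K × Fin 2) : ℕ :=
  2 * a.1 + a.2

theorem labelLT_iff {a b : Fin K × Fin 2} : LabelLT a b ↔ labelPos a < labelPos b := by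
  simp only [LabelLT, labelPos, Fin.lt_def, Fin.ext_iff]
  omega

theorem labelLE_iff {a b : Fin K × Fin 2} : LabelLE a b ↔ labelPos a ≤ labelPos b := by
  simp only [LabelLE, labelPos, Fin.lt_def, Fin.le_def, Fin.ext_iff]
  omega

theorem labelPos_lt (a : Fin K × Fin 2) : labelPos a < 2 * K := by
  rw [labelPos]
  omega

/-- For `m = tabExp T`, the number of boxes in row `q` of `T` whose label is one of the `n` smallest
labels. -/
def rowCount (m : KVar K 2 2 →₀ ℕ) (q : Fin 2) (n : ℕ) : ℕ :=
  ∑ a : Fin K × Fin 2 with labelPos a < n, m (a.1, q, a.2)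

theorem rowCount_add (m m' : KVar K 2 2 →₀ ℕ) (q : Fin 2) (n : ℕ) :
    rowCount (m + m') q n = rowCount m q n + rowCount m' q n :=
  sum_add_distrib

theorem rowCount_two_mul (m : KVar K 2 2 →₀ ℕ) (q : Fin 2) :
    rowCount m q (2 * K) = ∑ a : Fin K × Fin 2, m (a.1, q, a.2) := by
  simp only [rowCount, labelPos_lt, filter_true]

theorem rowCount_tabExp {n : ℕ} (T : Fin 2 → Fin n → Fin K × Fin 2) (q : Fin 2) (v : ℕ) :
    rowCount (tabExp T) q v = #{c | labelPos (T q c) < v} := by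
  simpa [rowCount, tabExp_apply] using
    sum_card_fiberwise_eq_card_filter univ {a | labelPos a < v} (T q)

/-- For `m = tabExp T`, this is the number of boxes in the first row of `T` whose label has position
less than `n`, minus the number of boxes in the second row whose label has position at most `n`.
The columns of the tableau obtained by sorting the rows of `T` are strictly increasing iff it has
no negative value. -/
def slack (m : KVar K 2 2 →₀ ℕ) (n : ℕ) : ℤ :=
  rowCount m 0 n - rowCount m 1 (n + 1)

theorem slack_add (m m' : KVar K 2 2 →₀ ℕ) (n : ℕ) :
    slack (m + m') n = slack m n + slack m' n := by
  simp only [slack, rowCount_add]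
  omega

/-- The exponent vectors of the form `tabExp T` for a semi-standard tableau `T` with two rows. -/
structure Ballot (m : KVar K 2 2 →₀ ℕ) : Prop where
  slack_nonneg (n : ℕ) : 0 ≤ slack m n
  rowCount_eq : rowCount m 0 (2 * K) = rowCount m 1 (2 * K)

theorem ballot_tabExp {n : ℕ} {T : Fin 2 → Fin n → Fin K × Fin 2}
    (hT : ∀ c, LabelLT (T 0 c) (T 1 c)) : Ballot (tabExp T) where
  slack_nonneg v := by
    rw [slack, sub_nonneg, rowCount_tabExp, rowCount_tabExp, Nat.cast_le]
    refine card_le_card fun c hc => ?_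
    rw [mem_filter, Nat.lt_succ_iff] at hc
    exact mem_filter.2 ⟨hc.1, (labelLT_iff.1 (hT c)).trans_le hc.2⟩
  rowCount_eq := by simp only [rowCount_tabExp, labelPos_lt]

theorem exists_monotone_of_card_fiber {α β : Type*} [Fintype α] [DecidableEq α] [LinearOrder β]
    (key : α → β) {n : ℕ} {f : α → ℕ} (hf : ∑ a, f a = n) :
    ∃ g : Fin n → α, Monotone (key ∘ g) ∧ ∀ a, #{c | g c = a} = f a := by
  have hcard : Fintype.card (Σ a, Fin (f a)) = n := by simp [hf]
  let e : Fin n ≃ Σ a, Fin (f a) := (Fintype.equivFinOfCardEq hcard).symm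
  let σ := Tuple.sort fun c => key (e c).1
  refine ⟨fun c => (e (σ c)).1, Tuple.monotone_sort fun c => key (e c).1, fun a => ?_⟩
  calc #{c | (e (σ c)).1 = a}
      = #{x : Σ a, Fin (f a) | x.1 = a} := by
        refine card_equiv (σ.trans e) fun c => ?_
        simp
    _ = #(univ.map (Function.Embedding.sigmaMk (β := fun a => Fin (f a)) a)) := by
        congr 1
        ext ⟨b, x⟩
        simp only [mem_filter_univ, mem_map, mem_univ, true_and]
        exact ⟨fun h => ⟨h ▸ x, by subst h; rfl⟩, fun ⟨_, hy⟩ => (congrArg Sigma.fst hy).symm⟩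
    _ = f a := by simp

theorem lt_of_card_filter_le {β : Type*} [LinearOrder β] {n : ℕ} {g₀ g₁ : Fin n → β}
    (h₀ : Monotone g₀) (h₁ : Monotone g₁) (h : ∀ v, #{c | g₁ c ≤ v} ≤ #{c | g₀ c < v})
    (c : Fin n) : g₀ c < g₁ c := by
  by_contra! hle
  have hlow : (c : ℕ) + 1 ≤ #{d | g₁ d ≤ g₁ c} := by
    rw [← Fin.card_Iic]
    exact card_le_card fun d hd => mem_filter.2 ⟨mem_univ d, h₁ (mem_Iic.1 hd)⟩
  have hup : #{d | g₀ d < g₁ c} ≤ (c : ℕ) := by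
    rw [← Fin.card_Iio]
    exact card_le_card fun d hd =>
      mem_Iio.2 (h₀.reflect_lt ((mem_filter.1 hd).2.trans_le hle))
  exact absurd (h (g₁ c)) (by omega)

theorem Ballot.exists_semiStandardTab {m : KVar K 2 2 →₀ ℕ} (hm : Ballot m) :
    ∃ (n : ℕ) (T : Fin 2 → Fin n → Fin K × Fin 2), IsSemiStandardTab T ∧ tabExp T = m := by
  have hrow (q : Fin 2) : ∑ a : Fin K × Fin 2, m (a.1, q, a.2) = rowCount m 0 (2 * K) := by
    rw [← rowCount_two_mul]
    obtain rfl | rfl : q = 0 ∨ q = 1 := by omega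
    exacts [rfl, hm.rowCount_eq.symm]
  choose T hmono hcard using fun q => exists_monotone_of_card_fiber labelPos (hrow q)
  have hT : tabExp T = m := by
    ext ⟨i, q, k⟩
    rw [tabExp_apply, hcard]
  refine ⟨_, T, ⟨fun q c c' hc => labelLE_iff.2 (hmono q hc), fun c q q' hq => ?_⟩, hT⟩
  obtain ⟨rfl, rfl⟩ : q = 0 ∧ q' = 1 := by omega
  refine labelLT_iff.2 (lt_of_card_filter_le (hmono 0) (hmono 1) (fun v => ?_) c)
  have hv := hm.slack_nonneg v
  rw [← hT, slack, rowCount_tabExp, rowCount_tabExp] at hv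
  simp only [Nat.lt_succ_iff] at hv
  simpa using hv

theorem exists_equiv_strictMonoOn_fiber {α β V : Type*} [Fintype α] [Fintype β] [LinearOrder α]
    [LinearOrder β] [DecidableEq V] {f : α → V} {g : β → V}
    (h : ∀ v, #{a | f a = v} = #{b | g b = v}) :
    ∃ e : α ≃ β, (∀ a, g (e a) = f a) ∧ ∀ a a', f a = f a' → a < a' → e a < e a' := by
  have hcard (v : V) : Fintype.card {a // f a = v} = Fintype.card {b // g b = v} := by
    rw [Fintype.card_subtype, Fintype.card_subtype, h]
  let e (v : V) : {a // f a = v} ≃o {b // g b = v} :=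
    (Fintype.orderIsoFinOfCardEq _ (hcard v)).symm.trans (Fintype.orderIsoFinOfCardEq _ rfl)
  refine ⟨Equiv.ofFiberEquiv fun v => (e v).toEquiv, Equiv.ofFiberEquiv_map _, ?_⟩
  intro a a' hf haa'
  have heq : (⟨a, hf⟩ : {x // f x = f a'}) < ⟨a', rfl⟩ := haa'
  have key : ∀ v (hv : f a = v), ((e v ⟨a, hv⟩ : {b // g b = v}) : β) = e (f a) ⟨a, rfl⟩ := by
    rintro _ rfl
    rfl
  exact (key _ hf).symm.trans_lt ((e (f a')).strictMono heq)

theorem card_filter_box {r n : ℕ} {P : Fin r ×ₗ Fin n → Prop} {Q : Fin n → Prop}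
    [DecidablePred P] [DecidablePred Q] {p : Fin r}
    (h : ∀ q c, P (toLex (q, c)) ↔ q = p ∧ Q c) : #{B | P B} = #{c | Q c} := by
  refine card_bij' (fun B _ => (ofLex B).2) (fun c _ => toLex (p, c)) ?_ ?_ ?_ ?_ <;>
    simp +contextual [Lex.forall, h]

theorem exists_linkedPair {r0 r1 cm cp : ℕ} {Tm : Fin r0 → Fin cm → Fin K × Fin r1}
    {Tp : Fin r1 → Fin cp → Fin K × Fin r0} (h : tabExp Tm = transposeExp (tabExp Tp)) :
    ∃ L : LinkedPair K r0 r1 cm cp, L.Tm = Tm ∧ L.Tp = Tp ∧ IsSemiStandardLink L := by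
  let varM (B : Fin r0 ×ₗ Fin cm) : KVar K r0 r1 :=
    ((Tm (ofLex B).1 (ofLex B).2).1, (Tm (ofLex B).1 (ofLex B).2).2, (ofLex B).1)
  let varP (C : Fin r1 ×ₗ Fin cp) : KVar K r0 r1 :=
    ((Tp (ofLex C).1 (ofLex C).2).1, (ofLex C).1, (Tp (ofLex C).1 (ofLex C).2).2)
  have hcard (v : KVar K r0 r1) : #{B | varM B = v} = #{C | varP C = v} := by
    obtain ⟨i, q, k⟩ := v
    calc #{B | varM B = (i, q, k)}
        = #{c | Tm k c = (i, q)} := card_filter_box (p := k) fun q c => by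
          simp only [varM, ofLex_toLex, Prod.ext_iff]
          grind
      _ = #{c | Tp q c = (i, k)} := by
        rw [← tabExp_apply, ← tabExp_apply, h, transposeExp_apply]
      _ = #{C | varP C = (i, q, k)} := Eq.symm <| card_filter_box (p := q) fun q c => by
        simp only [varP, ofLex_toLex, Prod.ext_iff]
        grind
  obtain ⟨e, he, hmono⟩ := exists_equiv_strictMonoOn_fiber hcard
  let L : LinkedPair K r0 r1 cm cp :=
    { Tm
      Tp
      link := toLex.trans (e.trans ofLex)
      link_row := fun p c => congrArg (·.2.1) (he (toLex (p, c)))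
      link_label := fun p c => Prod.ext (congrArg (·.1) (he (toLex (p, c))))
        (congrArg (·.2.2) (he (toLex (p, c)))) }
  refine ⟨L, rfl, rfl, fun p c c' hT hc => ?_⟩
  have hvar : varM (toLex (p, c)) = varM (toLex (p, c')) :=
    congrArg (fun a => (a.1, a.2, p)) hT
  have hrow : (L.link (p, c)).1 = (L.link (p, c')).1 := by
    rw [L.link_row, L.link_row, hT]
  have hlt := hmono _ _ hvar (Prod.Lex.toLex_lt_toLex.2 (Or.inr ⟨rfl, hc⟩))
  exact ((Prod.Lex.lt_iff.1 hlt).resolve_left hrow.not_lt).2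

end Content

section Admissible

variable {K : ℕ} {m : KVar K 2 2 →₀ ℕ}

/-- The exponent vectors of the form `tabExp L.Tp` for a semi-standard linked pair `L`; the two
conditions come from `T⁺` and `T⁻`. -/
structure Admissible (m : KVar K 2 2 →₀ ℕ) : Prop where
  ballot : Ballot m
  ballot_transpose : Ballot (transposeExp m)

theorem IsSemiStandardTab.labelLT {n : ℕ} {T : Fin 2 → Fin n → Fin K × Fin 2}
    (hT : IsSemiStandardTab T) (c : Fin n) : LabelLT (T 0 c) (T 1 c) :=
  hT.2 c 0 1 Fin.zero_lt_one

theorem IsSemiStandardPair.isLM {cm cp : ℕ} {L : LinkedPair K 2 2 cm cp}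
    (hL : IsSemiStandardPair L) : IsLM (pairPoly L) (tabExp L.Tp) :=
  LinkedPair.isLM_pairPoly hL.2.1.labelLT hL.1.labelLT

theorem IsSemiStandardPair.admissible {cm cp : ℕ} {L : LinkedPair K 2 2 cm cp}
    (hL : IsSemiStandardPair L) : Admissible (tabExp L.Tp) where
  ballot := ballot_tabExp hL.2.1.labelLT
  ballot_transpose := L.tabExp_dual_Tp ▸ ballot_tabExp hL.1.labelLT

theorem Admissible.exists_semiStandardPair (hm : Admissible m) :
    ∃ (cm cp : ℕ) (L : LinkedPair K 2 2 cm cp), IsSemiStandardPair L ∧ tabExp L.Tp = m := by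
  obtain ⟨cp, Tp, hTp, rfl⟩ := hm.ballot.exists_semiStandardTab
  obtain ⟨cm, Tm, hTm, h⟩ := hm.ballot_transpose.exists_semiStandardTab
  obtain ⟨L, rfl, rfl, hlink⟩ := exists_linkedPair h
  exact ⟨cm, cp, L, ⟨hTm, hTp, hlink⟩, rfl⟩

theorem LinkedPair.cm_pos {r0 r1 cm cp : ℕ} (L : LinkedPair K r0 r1 cm cp) (h : tabExp L.Tp ≠ 0) :
    0 < cm := by
  by_contra hcm
  obtain rfl : cm = 0 := by omega
  have hdual : tabExp L.dual.Tp = 0 := by simp [tabExp]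
  rw [tabExp_dual_Tp, EmbeddingLike.map_eq_zero_iff] at hdual
  exact h hdual

/-- The combinatorial form of primitivity of a linked pair, in terms of its leading exponent. -/
def Indecomposable (m : KVar K 2 2 →₀ ℕ) : Prop :=
  ∀ m₁ m₂, Admissible m₁ → Admissible m₂ → m = m₁ + m₂ → m₁ = 0 ∨ m₂ = 0

theorem IsPrimitive.indecomposable {cm cp : ℕ} {L : LinkedPair K 2 2 cm cp} (hL : IsPrimitive L) :
    Indecomposable (tabExp L.Tp) := by
  intro m₁ m₂ h₁ h₂ hadd
  obtain ⟨cm₁, cp₁, L₁, hL₁, rfl⟩ := h₁.exists_semiStandardPair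
  obtain ⟨cm₂, cp₂, L₂, hL₂, rfl⟩ := h₂.exists_semiStandardPair
  by_contra! hne
  exact hL.2.2 ⟨cm₁, cp₁, cm₂, cp₂, L₁, L₂, _, _, _, L₁.cm_pos hne.1, L₂.cm_pos hne.2, hL₁, hL₂,
    hL.1.isLM, hL₁.isLM, hL₂.isLM, hadd⟩

end Admissible

section Cumulative

variable {K r0 r1 : ℕ} (m : KVar K r0 r1 →₀ ℕ) (q : Fin r1) (k : Fin r0)

/-- For `m = tabExp T`, the number of boxes in row `q` of `T` labelled `(i, k)` for some `i < n`. -/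
def cumExp (n : ℕ) : ℕ :=
  ∑ i : Fin K, if (i : ℕ) < n then m (i, q, k) else 0

theorem cumExp_mono : Monotone (cumExp m q k) := fun a b hab => by
  refine sum_le_sum fun i _ => ?_
  split_ifs <;> omega

theorem cumExp_add (m m' : KVar K r0 r1 →₀ ℕ) (n : ℕ) :
    cumExp (m + m') q k n = cumExp m q k n + cumExp m' q k n := by
  rw [cumExp, cumExp, cumExp, ← sum_add_distrib]
  refine sum_congr rfl fun i _ => ?_
  split_ifs <;> rfl

theorem cumExp_single (i : Fin K) (q' : Fin r1) (k' : Fin r0) :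
    cumExp (Finsupp.single (i, q, k) 1) q' k' K = if q = q' ∧ k = k' then 1 else 0 := by
  simp [cumExp, Finsupp.single_apply, ite_and]

theorem cumExp_zero : cumExp m q k 0 = 0 := by
  simp [cumExp]

theorem cumExp_succ (i : Fin K) : cumExp m q k (i + 1) = cumExp m q k i + m (i, q, k) := by
  have hi : m (i, q, k) = ∑ j, if j = i then m (j, q, k) else 0 := by simp
  rw [hi, cumExp, cumExp, ← sum_add_distrib]
  refine sum_congr rfl fun j _ => ?_
  split_ifs <;> omega

theorem cumExp_transposeExp (n : ℕ) : cumExp (transposeExp m) k q n = cumExp m q k n :=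
  rfl

theorem cumExp_tabExp {n : ℕ} (T : Fin r1 → Fin n → Fin K × Fin r0) (v : ℕ) :
    cumExp (tabExp T) q k v = #{c | (T q c).2 = k ∧ ((T q c).1 : ℕ) < v} := by
  have hfiber := sum_card_fiberwise_eq_card_filter {c | (T q c).2 = k}
    ({i | (i : ℕ) < v} : Finset (Fin K)) fun c => (T q c).1
  simpa [cumExp, tabExp_apply, sum_filter, filter_filter, Prod.ext_iff, and_comm] using hfiber

theorem LinkedPair.cumExp_tabExp_Tp {cm cp : ℕ} (L : LinkedPair K r0 r1 cm cp) (n : ℕ) :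
    cumExp (tabExp L.Tp) q k n = #{c | (L.Tm k c).2 = q ∧ ((L.Tm k c).1 : ℕ) < n} := by
  rw [← cumExp_transposeExp, ← L.tabExp_dual_Tp, cumExp_tabExp]
  rfl

theorem exists_cumExp_lt_and_le {l : ℕ} (hl : 0 < l) (hlK : l ≤ cumExp m q k K) :
    ∃ β : Fin K, cumExp m q k β < l ∧ l ≤ cumExp m q k (β + 1) := by
  by_contra! h
  have hlt (n : ℕ) (hn : n ≤ K) : cumExp m q k n < l := by
    induction n with
    | zero => rwa [cumExp_zero]
    | succ n ih => exact h ⟨n, hn⟩ (ih (Nat.le_of_succ_le hn))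
  exact (hlt K le_rfl).not_ge hlK

end Cumulative

section Slack

variable {K : ℕ} (m : KVar K 2 2 →₀ ℕ)

theorem rowCount_eq_cumExp_add (q : Fin 2) (n : ℕ) :
    rowCount m q n = cumExp m q 0 ((n + 1) / 2) + cumExp m q 1 (n / 2) := by
  have h₀ (i : Fin K) : labelPos (i, 0) < n ↔ (i : ℕ) < (n + 1) / 2 := by
    simp only [labelPos, Fin.val_zero]
    omega
  have h₁ (i : Fin K) : labelPos (i, 1) < n ↔ (i : ℕ) < n / 2 := by
    simp only [labelPos, Fin.val_one]
    omega
  simp only [rowCount, cumExp, sum_filter, Fintype.sum_prod_type_right, Fin.sum_univ_two, h₀, h₁]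

theorem slack_eq (n : ℕ) : slack m n = cumExp m 0 0 ((n + 1) / 2) + cumExp m 0 1 (n / 2) -
    cumExp m 1 0 ((n + 2) / 2) - cumExp m 1 1 ((n + 1) / 2) := by
  simp only [slack, rowCount_eq_cumExp_add]
  push_cast
  ring

theorem slack_two_mul (i : ℕ) :
    slack m (2 * i) = cumExp m 0 0 i + cumExp m 0 1 i - cumExp m 1 0 (i + 1) - cumExp m 1 1 i := by
  have h₁ : (2 * i + 1) / 2 = i := by omega
  have h₂ : 2 * i / 2 = i := by omega
  have h₃ : (2 * i + 2) / 2 = i + 1 := by omega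
  rw [slack_eq, h₁, h₂, h₃]

theorem slack_two_mul_add_one (i : Fin K) :
    slack m (2 * i + 1) = slack m (2 * i) + m (i, 0, 0) - m (i, 1, 1) := by
  have h₁ : (2 * (i : ℕ) + 1 + 1) / 2 = i + 1 := by omega
  have h₂ : (2 * (i : ℕ) + 1) / 2 = i := by omega
  have h₃ : (2 * (i : ℕ) + 1 + 2) / 2 = i + 1 := by omega
  rw [slack_two_mul, slack_eq, h₁, h₂, h₃, cumExp_succ m 0 0, cumExp_succ m 1 1]
  push_cast
  ring

theorem slack_two_mul_add_two_le (i : Fin K) :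
    slack m (2 * i + 2) ≤ slack m (2 * i + 1) + m (i, 0, 1) := by
  have h₁ : (2 * (i : ℕ) + 1 + 1) / 2 = i + 1 := by omega
  have h₂ : (2 * (i : ℕ) + 1) / 2 = i := by omega
  have h₃ : (2 * (i : ℕ) + 1 + 2) / 2 = i + 1 := by omega
  have hmono := cumExp_mono m 1 0 (show (i : ℕ) + 1 ≤ i + 1 + 1 by omega)
  rw [← mul_add_one, slack_two_mul, slack_eq, h₁, h₂, h₃, cumExp_succ m 0 1]
  omega

theorem slack_le_slack_two_mul_add (i : Fin K) {n : ℕ} (hn : n + 1 = 2 * i) :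
    slack m n ≤ slack m (2 * i) + m (i, 1, 0) := by
  have h₁ : (n + 1) / 2 = i := by omega
  have h₂ : (n + 2) / 2 = i := by omega
  have hmono := cumExp_mono m 0 1 (show n / 2 ≤ i by omega)
  rw [slack_two_mul, slack_eq, h₁, h₂, cumExp_succ m 1 0]
  omega

end Slack

section Decomposition

variable {K : ℕ} {m m₁ m₂ : KVar K 2 2 →₀ ℕ}

theorem rowCount_single (i : Fin K) (q k q' : Fin 2) (n : ℕ) :
    rowCount (Finsupp.single (i, q, k) 1) q' n = if q = q' ∧ 2 * (i : ℕ) + k < n then 1 else 0 := by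
  rw [rowCount, sum_filter, sum_eq_single (i, k)]
  · simp [Finsupp.single_apply, labelPos, ← ite_and, and_comm]
  · rintro ⟨i', k'⟩ - hne
    simp only [Finsupp.single_apply]
    grind
  · simp

theorem Ballot.of_add_left (h : Ballot (m₁ + m₂)) (h₁ : Ballot m₁)
    (hs : ∀ n, slack m₁ n ≤ slack (m₁ + m₂) n) : Ballot m₂ where
  slack_nonneg n := by
    have hn := hs n
    rw [slack_add] at hn
    omega
  rowCount_eq := by
    have hadd := h.rowCount_eq
    rw [rowCount_add, rowCount_add, h₁.rowCount_eq] at hadd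
    omega

theorem Indecomposable.exists_slack_lt (hi : Indecomposable m) (hm : Admissible m)
    (hcard : 1 < cumExp m 0 0 K) (h₁ : Admissible m₁) (hle : m₁ ≤ m)
    (hcard₁ : cumExp m₁ 0 0 K = 1) :
    ∃ n, slack m n < slack m₁ n ∨ slack (transposeExp m) n < slack (transposeExp m₁) n := by
  by_contra! hs
  obtain ⟨m₂, rfl⟩ := exists_add_of_le hle
  have ht : Ballot (transposeExp m₁ + transposeExp m₂) := map_add transposeExp m₁ m₂ ▸ hm.2
  have h₂ : Admissible m₂ := ⟨hm.1.of_add_left h₁.1 fun n => (hs n).1,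
    ht.of_add_left h₁.2 fun n => map_add transposeExp m₁ m₂ ▸ (hs n).2⟩
  obtain rfl | rfl := hi m₁ m₂ h₁ h₂ rfl
  · simp [cumExp] at hcard₁
  · rw [add_zero] at hcard
    omega

variable {α β μ ν : Fin K}

/-- The exponent vector of `x^α_{11} x^β_{22}`. -/
noncomputable def diagExp (α β : Fin K) : KVar K 2 2 →₀ ℕ :=
  Finsupp.single (α, 0, 0) 1 + Finsupp.single (β, 1, 1) 1

/-- The exponent vector of `x^μ_{12} x^ν_{21}`. -/
noncomputable def antidiagExp (μ ν : Fin K) : KVar K 2 2 →₀ ℕ :=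
  Finsupp.single (μ, 0, 1) 1 + Finsupp.single (ν, 1, 0) 1

theorem transposeExp_diagExp : transposeExp (diagExp α β) = diagExp α β := by
  simp [diagExp]

theorem transposeExp_antidiagExp : transposeExp (antidiagExp μ ν) = antidiagExp ν μ := by
  simp [antidiagExp, add_comm]

theorem slack_diagExp (n : ℕ) : slack (diagExp α β) n =
    (if 2 * (α : ℕ) < n then 1 else 0) - if 2 * (β : ℕ) < n then 1 else 0 := by
  simp [slack, diagExp, rowCount_add, rowCount_single]

theorem slack_antidiagExp (n : ℕ) : slack (antidiagExp μ ν) n =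
    (if 2 * (μ : ℕ) + 1 < n then 1 else 0) - if 2 * (ν : ℕ) ≤ n then 1 else 0 := by
  simp [slack, antidiagExp, rowCount_add, rowCount_single]

theorem rowCount_diagExp (q : Fin 2) : rowCount (diagExp α β) q (2 * K) = 1 := by
  rw [diagExp, rowCount_add, rowCount_single, rowCount_single]
  grind

theorem rowCount_antidiagExp (q : Fin 2) : rowCount (antidiagExp μ ν) q (2 * K) = 1 := by
  rw [antidiagExp, rowCount_add, rowCount_single, rowCount_single]
  grind

theorem cumExp_diagExp : cumExp (diagExp α β) 0 0 K = 1 := by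
  simp [diagExp, cumExp_add, cumExp_single]

theorem cumExp_antidiagExp : cumExp (antidiagExp μ ν) 0 0 K = 0 := by
  simp [antidiagExp, cumExp_add, cumExp_single]

theorem ballot_diagExp (hαβ : α ≤ β) : Ballot (diagExp α β) where
  slack_nonneg n := by
    rw [slack_diagExp]
    split_ifs <;> omega
  rowCount_eq := by rw [rowCount_diagExp, rowCount_diagExp]

theorem ballot_diagExp_add_antidiagExp (hαν : α < ν) (hμβ : μ < β) :
    Ballot (diagExp α β + antidiagExp μ ν) where
  slack_nonneg n := by
    rw [slack_add, slack_diagExp, slack_antidiagExp]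
    split_ifs <;> omega
  rowCount_eq := by simp only [rowCount_add, rowCount_diagExp, rowCount_antidiagExp]

theorem Indecomposable.exists_slack_eq_zero (hi : Indecomposable m) (hm : Admissible m)
    (hcard : 1 < cumExp m 0 0 K) (hαβ : α ≤ β) (hα : m (α, 0, 0) ≠ 0) (hβ : m (β, 1, 1) ≠ 0)
    (ht : ∀ n, 2 * (α : ℕ) < n → n ≤ 2 * β → 1 ≤ slack (transposeExp m) n) :
    ∃ n, 2 * (α : ℕ) < n ∧ n ≤ 2 * β ∧ slack m n = 0 := by
  have hadm : Admissible (diagExp α β) :=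
    ⟨ballot_diagExp hαβ, transposeExp_diagExp.symm ▸ ballot_diagExp hαβ⟩
  have hle : diagExp α β ≤ m := by
    intro v
    simp only [diagExp, Finsupp.add_apply, Finsupp.single_apply]
    grind
  obtain ⟨n, h | h⟩ := hi.exists_slack_lt hm hcard hadm hle cumExp_diagExp
  · have hn := hm.ballot.slack_nonneg n
    rw [slack_diagExp] at h
    refine ⟨n, ?_⟩
    split_ifs at h <;> omega
  · have hn := hm.ballot_transpose.slack_nonneg n
    have htn := ht n
    rw [transposeExp_diagExp, slack_diagExp] at h
    split_ifs at h <;> omega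

theorem Indecomposable.exists_slack_eq_zero_of_antidiag (hi : Indecomposable m)
    (hm : Admissible m) (hcard : 1 < cumExp m 0 0 K) (hαν : α < ν) (hνμ : ν ≤ μ) (hμβ : μ < β)
    (hα : m (α, 0, 0) ≠ 0) (hβ : m (β, 1, 1) ≠ 0) (hν : m (ν, 1, 0) ≠ 0) (hμ : m (μ, 0, 1) ≠ 0)
    (ht : ∀ n, 2 * (α : ℕ) < n → n ≤ 2 * β → 2 ≤ slack (transposeExp m) n) :
    ∃ n, (2 * (α : ℕ) < n ∧ n < 2 * ν ∨ 2 * (μ : ℕ) + 1 < n ∧ n ≤ 2 * β) ∧ slack m n = 0 := by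
  have htrans : transposeExp (diagExp α β + antidiagExp μ ν) = diagExp α β + antidiagExp ν μ := by
    rw [map_add, transposeExp_diagExp, transposeExp_antidiagExp]
  have hadm : Admissible (diagExp α β + antidiagExp μ ν) :=
    ⟨ballot_diagExp_add_antidiagExp hαν hμβ, htrans.symm ▸
      ballot_diagExp_add_antidiagExp (hαν.trans_le hνμ) (hνμ.trans_lt hμβ)⟩
  have hle : diagExp α β + antidiagExp μ ν ≤ m := by
    intro v
    simp only [diagExp, antidiagExp, Finsupp.add_apply, Finsupp.single_apply]
    grind
  obtain ⟨n, h | h⟩ := hi.exists_slack_lt hm hcard hadm hle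
    (by rw [cumExp_add, cumExp_diagExp, cumExp_antidiagExp])
  · have hn := hm.ballot.slack_nonneg n
    rw [slack_add, slack_diagExp, slack_antidiagExp] at h
    refine ⟨n, ?_⟩
    split_ifs at h <;> omega
  · have hn := hm.ballot_transpose.slack_nonneg n
    have htn := ht n
    rw [htrans, slack_add, slack_diagExp, slack_antidiagExp] at h
    split_ifs at h <;> omega

end Decomposition

section ZeroSlack

variable {K : ℕ} {m : KVar K 2 2 →₀ ℕ} {α β : Fin K}

-- If the last zero were at `2i`, then `x^i_{11}` would occur, giving a later zero up to `2β`.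
theorem Indecomposable.exists_last_slack_eq_zero (hi : Indecomposable m) (hm : Admissible m)
    (hcard : 1 < cumExp m 0 0 K) (hαβ : α ≤ β) (hα : m (α, 0, 0) ≠ 0) (hβ : m (β, 1, 1) ≠ 0)
    (ht : ∀ n, 2 * (α : ℕ) < n → n ≤ 2 * β → 1 ≤ slack (transposeExp m) n) :
    ∃ μ < β, m (μ, 0, 1) ≠ 0 ∧ ∀ n, 2 * (μ : ℕ) + 1 < n → n ≤ 2 * β → slack m n ≠ 0 := by
  obtain ⟨n₀, h₁, h₂, h₃⟩ := hi.exists_slack_eq_zero hm hcard hαβ hα hβ ht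
  obtain ⟨n, hn, hmax⟩ := exists_max_image {n ∈ Ioc (2 * (α : ℕ)) (2 * β) | slack m n = 0} id
    ⟨n₀, mem_filter.2 ⟨mem_Ioc.2 ⟨h₁, h₂⟩, h₃⟩⟩
  simp only [mem_filter, mem_Ioc, and_imp, id] at hn hmax
  obtain ⟨⟨hαn, hnβ⟩, hzero⟩ := hn
  have hpos (l : ℕ) (hl : n < l) (hlβ : l ≤ 2 * β) : slack m l ≠ 0 := fun h =>
    (hmax l (hαn.trans hl) hlβ h).not_gt hl
  obtain ⟨i, rfl | rfl⟩ := n.even_or_odd'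
  · lift i to Fin K using by omega
    have hstep := slack_two_mul_add_one m i
    have hnonneg := hm.ballot.slack_nonneg (2 * i + 1)
    have hPi : m (i, 0, 0) ≠ 0 := by
      obtain rfl | hiβ := eq_or_ne i β
      · omega
      · have hne := hpos (2 * i + 1) (by omega) (by omega)
        omega
    obtain ⟨l, hil, hlβ, hl⟩ := hi.exists_slack_eq_zero hm hcard (by omega) hPi hβ
      fun l hl => ht l (by omega)
    exact absurd hl (hpos l hil hlβ)
  · lift i to Fin K using by omega
    have hstep := slack_two_mul_add_two_le m i
    have hnonneg := hm.ballot.slack_nonneg (2 * i + 2)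
    have hne := hpos (2 * i + 2) (by omega) (by omega)
    exact ⟨i, by omega, by omega, hpos⟩

theorem Indecomposable.exists_first_slack_eq_zero (hi : Indecomposable m) (hm : Admissible m)
    (hcard : 1 < cumExp m 0 0 K) (hαβ : α ≤ β) (hα : m (α, 0, 0) ≠ 0) (hβ : m (β, 1, 1) ≠ 0)
    (ht : ∀ n, 2 * (α : ℕ) < n → n ≤ 2 * β → 1 ≤ slack (transposeExp m) n) :
    ∃ ν > α, ν ≤ β ∧ m (ν, 1, 0) ≠ 0 ∧ slack m (2 * ν) = 0 ∧
      ∀ n, 2 * (α : ℕ) < n → n < 2 * ν → slack m n ≠ 0 := by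
  obtain ⟨n₀, h₁, h₂, h₃⟩ := hi.exists_slack_eq_zero hm hcard hαβ hα hβ ht
  obtain ⟨n, hn, hmin⟩ := exists_min_image {n ∈ Ioc (2 * (α : ℕ)) (2 * β) | slack m n = 0} id
    ⟨n₀, mem_filter.2 ⟨mem_Ioc.2 ⟨h₁, h₂⟩, h₃⟩⟩
  simp only [mem_filter, mem_Ioc, and_imp, id] at hn hmin
  obtain ⟨⟨hαn, hnβ⟩, hzero⟩ := hn
  have hpos (l : ℕ) (hαl : 2 * (α : ℕ) < l) (hl : l < n) : slack m l ≠ 0 := fun h =>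
    (hmin l hαl (hl.le.trans hnβ) h).not_gt hl
  obtain ⟨k, rfl | rfl⟩ := n.even_or_odd'
  · lift k to Fin K using by omega
    have hstep := slack_le_slack_two_mul_add m k (n := 2 * k - 1) (by omega)
    have hnonneg := hm.ballot.slack_nonneg (2 * k - 1)
    have hne := hpos (2 * k - 1) (by omega) (by omega)
    exact ⟨k, by omega, by omega, by omega, hzero, hpos⟩
  · lift k to Fin K using by omega
    have hstep := slack_two_mul_add_one m k
    have hnonneg := hm.ballot.slack_nonneg (2 * k)
    have hQk : m (k, 1, 1) ≠ 0 := by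
      obtain rfl | hkα := eq_or_ne k α
      · omega
      · have hne := hpos (2 * k) (by omega) (by omega)
        omega
    obtain ⟨l, hαl, hlk, hl⟩ := hi.exists_slack_eq_zero hm hcard (by omega) hα hQk
      fun l hαl _ => ht l hαl (by omega)
    exact absurd hl (hpos l hαl (by omega))

theorem Indecomposable.exists_slack_transposeExp_lt_two (hi : Indecomposable m)
    (hm : Admissible m) (hcard : 1 < cumExp m 0 0 K) (hαβ : α ≤ β) (hα : m (α, 0, 0) ≠ 0)
    (hβ : m (β, 1, 1) ≠ 0) :
    ∃ n, 2 * (α : ℕ) < n ∧ n ≤ 2 * β ∧ slack (transposeExp m) n < 2 := by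
  by_contra! ht
  have ht₁ (n : ℕ) (hαn : 2 * (α : ℕ) < n) (hnβ : n ≤ 2 * β) : 1 ≤ slack (transposeExp m) n :=
    one_le_two.trans (ht n hαn hnβ)
  obtain ⟨ν, hαν, hνβ, hν, hνzero, hfirst⟩ :=
    hi.exists_first_slack_eq_zero hm hcard hαβ hα hβ ht₁
  obtain ⟨μ, hμβ, hμ, hlast⟩ := hi.exists_last_slack_eq_zero hm hcard hαβ hα hβ ht₁
  have hνμ : ν ≤ μ := by
    by_contra! hμν
    exact hlast (2 * ν) (by omega) (by omega) hνzero
  obtain ⟨n, ⟨hαn, hnν⟩ | ⟨hμn, hnβ⟩, hn⟩ :=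
    hi.exists_slack_eq_zero_of_antidiag hm hcard hαν hνμ hμβ hα hβ hν hμ ht
  · exact hfirst n hαn hnν hn
  · exact hlast n hμn hnβ hn

end ZeroSlack

section Inequality

variable {K : ℕ} {m : KVar K 2 2 →₀ ℕ} {α : Fin K} {j s s' : ℕ}

-- Here `α` is the first entry of the label of `B`, and `s'` is the number of boxes `(i, 1)` in the
-- second row of `T⁻` to the left of `B`, so that `hj` counts the columns weakly to the left of `B`.
theorem Admissible.add_cumExp_zero_one_lt (hm : Admissible m) (hα : cumExp m 0 0 α < j)
    (hj : j + cumExp m 1 0 α = s + s' + 1) (hs : s ≤ cumExp m 1 1 K)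
    (hs' : ∀ β : Fin K, cumExp m 1 1 β < s → cumExp m 0 1 (β + 1) ≤ s') :
    s + cumExp m 0 1 α < j + cumExp m 1 0 α := by
  by_contra! hle
  have hslack := hm.ballot_transpose.slack_nonneg (2 * α)
  simp only [slack_two_mul, cumExp_transposeExp] at hslack
  have hU := cumExp_mono m 0 1 (Nat.le_add_right (α : ℕ) 1)
  obtain ⟨β, hβ, hβ'⟩ := exists_cumExp_lt_and_le m 1 1
    (l := j + cumExp m 1 0 α - cumExp m 0 1 α) (by omega) (by omega)
  have hαβ : (α : ℕ) < β + 1 := (cumExp_mono m 1 1).reflect_lt (by omega)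
  have hUβ := cumExp_mono m 0 1 hαβ.le
  have hUs' := hs' β (by omega)
  omega

theorem Indecomposable.add_cumExp_one_zero_lt (hi : Indecomposable m) (hm : Admissible m)
    (hα : cumExp m 0 0 α < j) (hα' : j ≤ cumExp m 0 0 (α + 1))
    (hj : j + cumExp m 1 0 α = s + s' + 1) (hs : s ≤ cumExp m 1 1 K)
    (hs' : ∀ β : Fin K, cumExp m 1 1 β < s → cumExp m 0 1 (β + 1) ≤ s') :
    s + cumExp m 1 0 α < j + cumExp m 0 1 α := by
  by_contra! hle
  have hUV := hm.add_cumExp_zero_one_lt hα hj hs hs'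
  have hslack := hm.ballot.slack_nonneg (2 * α)
  rw [slack_two_mul] at hslack
  have hV := cumExp_mono m 1 0 (Nat.le_add_right (α : ℕ) 1)
  obtain ⟨β, hβ, hβ'⟩ := exists_cumExp_lt_and_le m 1 1
    (l := j + cumExp m 0 1 α - cumExp m 1 0 α) (by omega) (by omega)
  have hαβ : (α : ℕ) < β + 1 := (cumExp_mono m 1 1).reflect_lt (by omega)
  have hUs' := hs' β (by omega)
  have hP := cumExp_succ m 0 0 α
  have hQ := cumExp_succ m 1 1 β
  have hPK := cumExp_mono m 0 0 (show (α : ℕ) + 1 ≤ K from α.isLt)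
  obtain ⟨n, hαn, hnβ, hn⟩ := hi.exists_slack_transposeExp_lt_two (α := α) (β := β) hm
    (by omega) (by omega) (by omega) (by omega)
  have hPn := cumExp_mono m 0 0 (show (α : ℕ) + 1 ≤ (n + 1) / 2 by omega)
  have hVn := cumExp_mono m 1 0 (show (α : ℕ) ≤ n / 2 by omega)
  have hUn := cumExp_mono m 0 1 (show (n + 2) / 2 ≤ (β : ℕ) + 1 by omega)
  have hQn := cumExp_mono m 1 1 (show (n + 1) / 2 ≤ (β : ℕ) by omega)
  simp only [slack_eq, cumExp_transposeExp] at hn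
  omega

theorem Indecomposable.abs_cumExp_sub_lt (hi : Indecomposable m) (hm : Admissible m)
    (hα : cumExp m 0 0 α < j) (hα' : j ≤ cumExp m 0 0 (α + 1))
    (hj : j + cumExp m 1 0 α = s + s' + 1) (hs : s ≤ cumExp m 1 1 K)
    (hs' : ∀ β : Fin K, cumExp m 1 1 β < s → cumExp m 0 1 (β + 1) ≤ s') :
    |(cumExp m 0 1 α : ℤ) - cumExp m 1 0 α| < j - s := by
  have h₁ := hm.add_cumExp_zero_one_lt hα hj hs hs'
  have h₂ := hi.add_cumExp_one_zero_lt hm hα hα' hj hs hs'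
  rw [abs_lt]
  omega

end Inequality

section Rows

variable {K r n : ℕ} {t : Fin n → Fin K × Fin r} {b : Fin n} {k : Fin r}

theorem lt_iff_fst_lt_of_snd_lt (ht : ∀ c c', c ≤ c' → LabelLE (t c) (t c')) {c : Fin n}
    (h : (t b).2 < (t c).2) : c < b ↔ ((t c).1 : ℕ) < (t b).1 := by
  refine ⟨fun hcb => (ht c b hcb.le).fst_lt h, fun hfst => ?_⟩
  by_contra! hbc
  exact (ht b c hbc).fst_le.not_gt hfst

theorem card_snd_eq_lt_eq_card_fst_lt (ht : ∀ c c', c ≤ c' → LabelLE (t c) (t c'))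
    (hb : (t b).2 < k) :
    #{c | (t c).2 = k ∧ c < b} = #{c | (t c).2 = k ∧ ((t c).1 : ℕ) < (t b).1} :=
  congrArg card <| filter_congr fun _ _ => and_congr_right fun hc =>
    lt_iff_fst_lt_of_snd_lt ht (hb.trans_eq hc.symm)

theorem card_snd_eq_fst_lt_lt_card_le (ht : ∀ c c', c ≤ c' → LabelLE (t c) (t c'))
    (hb : (t b).2 = k) :
    #{c | (t c).2 = k ∧ ((t c).1 : ℕ) < (t b).1} < #{c | (t c).2 = k ∧ c ≤ b} := by
  refine card_lt_card ((ssubset_iff_of_subset fun c hc => ?_).2 ⟨b, by simp [hb], by simp⟩)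
  simp only [mem_filter_univ] at hc ⊢
  exact ⟨hc.1, le_of_not_ge fun hbc => (ht b c hbc).fst_le.not_gt hc.2⟩

theorem card_snd_eq_le_le_card_fst_lt_succ (ht : ∀ c c', c ≤ c' → LabelLE (t c) (t c')) :
    #{c | (t c).2 = k ∧ c ≤ b} ≤ #{c | (t c).2 = k ∧ ((t c).1 : ℕ) < (t b).1 + 1} :=
  card_le_card <| monotone_filter_right _ fun c _ hc =>
    ⟨hc.1, Nat.lt_succ_of_le (ht c b hc.2).fst_le⟩

theorem card_snd_eq_lt_le_card_fst_lt :
    #{c | (t c).2 = k ∧ c < b} ≤ #{c | (t c).2 = k ∧ ((t c).1 : ℕ) < K} :=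
  card_le_card <| monotone_filter_right _ fun c _ hc => ⟨hc.1, (t c).1.isLt⟩

theorem card_fst_lt_succ_le_card_lt (ht : ∀ c c', c ≤ c' → LabelLE (t c) (t c')) {l : Fin r}
    (hkl : k < l) {v : ℕ}
    (h : #{c | (t c).2 = l ∧ ((t c).1 : ℕ) < v} < #{c | (t c).2 = l ∧ c < b}) :
    #{c | (t c).2 = k ∧ ((t c).1 : ℕ) < v + 1} ≤ #{c | (t c).2 = k ∧ c < b} := by
  obtain ⟨d, hd, hdv⟩ := exists_mem_notMem_of_card_lt_card h
  simp only [mem_filter_univ, not_and, not_lt] at hd hdv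
  have hvd := hdv hd.1
  refine card_le_card <| monotone_filter_right _ fun c _ hc => ⟨hc.1, lt_of_not_ge fun hbc => ?_⟩
  have hdc := (ht d c (hd.2.le.trans hbc)).fst_lt (by rwa [hc.1, hd.1])
  omega

theorem card_eq_zero_and_add_card_eq_one_and (f : Fin n → Fin 2) (p : Fin n → Prop)
    [DecidablePred p] :
    #{c | f c = 0 ∧ p c} + #{c | f c = 1 ∧ p c} = #{c | p c} := by
  rw [← card_filter_add_card_filter_not (s := {c | p c}) (f · = 0), filter_filter, filter_filter]
  have hne (c : Fin n) : f c = 1 ↔ ¬f c = 0 := by omega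
  simp only [hne, and_comm]

theorem card_eq_zero_lt_add_card_eq_one_lt (f : Fin n → Fin 2) (b : Fin n) :
    #{c | f c = 0 ∧ c < b} + #{c | f c = 1 ∧ c < b} = b := by
  rw [card_eq_zero_and_add_card_eq_one_and, filter_gt_eq_Iio, Fin.card_Iio]

theorem card_eq_zero_le_add_card_eq_one_lt {f : Fin n → Fin 2} (hb : f b = 0) :
    #{c | f c = 0 ∧ c ≤ b} + #{c | f c = 1 ∧ c < b} = b + 1 := by
  have hlt (c : Fin n) : f c = 1 ∧ c < b ↔ f c = 1 ∧ c ≤ b := by grind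
  simp only [hlt]
  rw [card_eq_zero_and_add_card_eq_one_and, filter_ge_eq_Iic, Fin.card_Iic]

end Rows

/-- Let `r0 = r1 = 2` and let `(T⁻, T⁺, σ)` be a primitive
semi-standard linked pair.  Fix a box `B = (0, b)` in the first row of `T⁻`
whose label has second entry `1`; let `j` be the number of such boxes weakly
to the left of `B`, `s` the number of second-row boxes of `T⁻` with second
label entry `2` strictly to the left of `B`, `y` the number of first-row boxes
of `T⁻` with second label entry `2` strictly to the left of `B`, and `x` the
number of first-row boxes of `T⁺` with second label entry `2` strictly to the
left of the box of `T⁺` linked to `B`.  Then `t := j - s > 0` and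
`|x - y| < t`. -/
theorem statement17 (K cm cp : ℕ) (hK : 1 ≤ K)
    (L : LinkedPair K 2 2 cm cp) (hprim : IsPrimitive L)
    (b : Fin cm) (hb : (L.Tm 0 b).2 = 0) :
    0 < ((Finset.univ.filter fun c : Fin cm =>
            (L.Tm 0 c).2 = 0 ∧ c ≤ b).card : ℤ) -
        ((Finset.univ.filter fun c : Fin cm =>
            (L.Tm 1 c).2 = 1 ∧ c < b).card : ℤ) ∧
    |((Finset.univ.filter fun c : Fin cp =>
          (L.Tp 0 c).2 = 1 ∧ c < (L.link (0, b)).2).card : ℤ) -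
      ((Finset.univ.filter fun c : Fin cm =>
          (L.Tm 0 c).2 = 1 ∧ c < b).card : ℤ)| <
      ((Finset.univ.filter fun c : Fin cm =>
          (L.Tm 0 c).2 = 0 ∧ c ≤ b).card : ℤ) -
        ((Finset.univ.filter fun c : Fin cm =>
            (L.Tm 1 c).2 = 1 ∧ c < b).card : ℤ) := by
  have hTm := hprim.1.1.1
  have hlink : L.Tp 0 (L.link (0, b)).2 = ((L.Tm 0 b).1, 0) := by
    rw [← L.link_label, L.link_row, hb]
  have hx := card_snd_eq_lt_eq_card_fst_lt (hprim.1.2.1.1 0)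
    ((congrArg Prod.snd hlink).trans_lt Fin.zero_lt_one)
  rw [hlink, ← cumExp_tabExp] at hx
  have hy := card_snd_eq_lt_eq_card_fst_lt (hTm 0) (hb.trans_lt Fin.zero_lt_one)
  rw [← L.cumExp_tabExp_Tp] at hy
  have hrow₀ := card_eq_zero_le_add_card_eq_one_lt (f := fun c => (L.Tm 0 c).2) hb
  have hrow₁ := card_eq_zero_lt_add_card_eq_one_lt (fun c => (L.Tm 1 c).2) b
  have hs' (β : Fin K) := card_fst_lt_succ_le_card_lt (hTm 1) Fin.zero_lt_one (b := b) (v := β)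
  simp only [← L.cumExp_tabExp_Tp] at hs'
  have habs := hprim.indecomposable.abs_cumExp_sub_lt hprim.1.admissible
    ((L.cumExp_tabExp_Tp ..).trans_lt (card_snd_eq_fst_lt_lt_card_le (hTm 0) hb))
    ((card_snd_eq_le_le_card_fst_lt_succ (hTm 0)).trans_eq (L.cumExp_tabExp_Tp ..).symm) (by omega)
    (card_snd_eq_lt_le_card_fst_lt.trans_eq (L.cumExp_tabExp_Tp ..).symm) hs'
  rw [hx, hy]
  exact ⟨(abs_nonneg _).trans_lt habs, habs⟩
end QuiverSAGBI
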